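/- Let (Δ; Ω, ≤) be a homological system over an Artin algebra Λ with height function h, let {1, 2, …, a} be the image of h, let M ∈ F(Δ), and let {0} = W_{a+1} ⊆ W_a ⊆ ⋯ ⊆ W_1 = M and {0} = W'_{a+1} ⊆ W'_a ⊆ ⋯ ⊆ W'_1 = M be two h-filtrations of M. Then W_a = W'_a; that is, the bottom layer of an h-filtration is uniquely determined by M, being equal to the trace tr_{W_a}(M) of W_a in M. -/

import Mathlib

universe u v

open DirectSum

/-- The height function of a finite preordered set `Ω`: `h ω` is `1` plus the length of the
longest strict chain `ω₀ < ω₁ < ⋯ < ωₙ = ω` ending at `ω` (so minimal elements have height 1). -/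
noncomputable def heightFun {Ω : Type v} [Preorder Ω] [Fintype Ω] (ω : Ω) : ℕ :=
  1 + (⨆ (p : LTSeries Ω) (_ : p.last = ω), (p.length : ℕ∞)).toNat

/-- `EverySESSplits Λ A B` says that every short exact sequence of `Λ`-modules
`0 → A → E → B → 0` splits; this is the statement `Ext¹_Λ(B, A) = 0`. -/
def EverySESSplits (Λ : Type u) [Ring Λ] (A B : Type u)
    [AddCommGroup A] [Module Λ A] [AddCommGroup B] [Module Λ B] : Prop :=
  ∀ (E : Type u) [AddCommGroup E] [Module Λ E] (f : A →ₗ[Λ] E) (g : E →ₗ[Λ] B),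
    Function.Injective f → Function.Surjective g → LinearMap.range f = LinearMap.ker g →
      ∃ s : B →ₗ[Λ] E, g.comp s = LinearMap.id

/-- A homological system `(Δ; Ω, ≤)` over the ring `Λ`:
`Ω` is a finite (pre)ordered index set; the `Δ ω` are pairwise nonisomorphic indecomposable
finitely generated `Λ`-modules satisfying (HS3) `Hom (Δ ω, Δ ω') ≠ 0 → ω ≤ ω'` and
(HS4) `Ext¹ (Δ ω, Δ ω') ≠ 0 → ω ≤ ω' ∧ ¬ ω' ≤ ω` (the latter expressed contrapositively via
splitting of all short exact sequences `0 → Δ ω' → E → Δ ω → 0`). -/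
structure IsHomologicalSystem (Λ : Type u) [Ring Λ] {Ω : Type v} [Preorder Ω] [Fintype Ω]
    (Δ : Ω → Type u) [∀ ω, AddCommGroup (Δ ω)] [∀ ω, Module Λ (Δ ω)] : Prop where
  fg : ∀ ω, Module.Finite Λ (Δ ω)
  nontrivial : ∀ ω, Nontrivial (Δ ω)
  indecomposable : ∀ ω (A B : Submodule Λ (Δ ω)), IsCompl A B → A = ⊥ ∨ B = ⊥
  pairwise_nonIso : ∀ ω ω', ω ≠ ω' → IsEmpty (Δ ω ≃ₗ[Λ] Δ ω')
  hs3 : ∀ ω ω' (f : Δ ω →ₗ[Λ] Δ ω'), f ≠ 0 → ω ≤ ω'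
  hs4 : ∀ ω ω', ¬(ω ≤ ω' ∧ ¬ ω' ≤ ω) → EverySESSplits Λ (Δ ω') (Δ ω)

/-- `IsDeltaFiltration Λ Δ t F` says that `⊥ = F 0 ⊊ F 1 ⊊ ⋯ ⊊ F t = ⊤` is a `Δ`-filtration
of `M`, i.e. each factor `F (i+1) / F i` is isomorphic to some `Δ ω`. -/
def IsDeltaFiltration (Λ : Type u) [Ring Λ] {Ω : Type v} [Preorder Ω] [Fintype Ω]
    (Δ : Ω → Type u) [∀ ω, AddCommGroup (Δ ω)] [∀ ω, Module Λ (Δ ω)]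
    {M : Type u} [AddCommGroup M] [Module Λ M]
    (t : ℕ) (F : Fin (t + 1) → Submodule Λ M) : Prop :=
  F 0 = ⊥ ∧ F (Fin.last t) = ⊤ ∧ StrictMono F ∧
    ∀ i : Fin t, ∃ ω : Ω,
      Nonempty ((F i.succ ⧸ (F i.castSucc).comap (F i.succ).subtype) ≃ₗ[Λ] Δ ω)

/-- `M ∈ 𝔉(Δ)`: the `Λ`-module `M` admits a `Δ`-filtration. -/
def MemFiltCat (Λ : Type u) [Ring Λ] {Ω : Type v} [Preorder Ω] [Fintype Ω]
    (Δ : Ω → Type u) [∀ ω, AddCommGroup (Δ ω)] [∀ ω, Module Λ (Δ ω)]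
    (M : Type u) [AddCommGroup M] [Module Λ M] : Prop :=
  ∃ (t : ℕ) (F : Fin (t + 1) → Submodule Λ M), IsDeltaFiltration Λ Δ t F

/-- `ℓ_ω(F)`: the number of factors of the filtration `F` isomorphic to `Δ ω`. -/
noncomputable def ellOmega (Λ : Type u) [Ring Λ] {Ω : Type v} [Preorder Ω] [Fintype Ω]
    (Δ : Ω → Type u) [∀ ω, AddCommGroup (Δ ω)] [∀ ω, Module Λ (Δ ω)]
    {M : Type u} [AddCommGroup M] [Module Λ M]
    (t : ℕ) (F : Fin (t + 1) → Submodule Λ M) (ω : Ω) : ℕ :=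
  Nat.card {i : Fin t //
    Nonempty ((F i.succ ⧸ (F i.castSucc).comap (F i.succ).subtype) ≃ₗ[Λ] Δ ω)}

/-- An `h`-filtration `0 = W (a+1) ⊆ W a ⊆ ⋯ ⊆ W 1 = M` of `M`: the `i`-th layer
`W i / W (i+1)` is a finite direct sum `⨁_{ω : h ω = i} (n ω) • Δ ω` of copies of the `Δ ω`
with `heightFun ω = i`. -/
def IsHFiltration (Λ : Type u) [Ring Λ] {Ω : Type v} [Preorder Ω] [Fintype Ω]
    (Δ : Ω → Type u) [∀ ω, AddCommGroup (Δ ω)] [∀ ω, Module Λ (Δ ω)]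
    {M : Type u} [AddCommGroup M] [Module Λ M]
    (a : ℕ) (W : ℕ → Submodule Λ M) (n : Ω → ℕ) : Prop :=
  W (a + 1) = ⊥ ∧ W 1 = ⊤ ∧ (∀ i, 1 ≤ i → i ≤ a → W (i + 1) ≤ W i) ∧
    ∀ i, 1 ≤ i → i ≤ a →
      Nonempty ((W i ⧸ (W (i + 1)).comap (W i).subtype) ≃ₗ[Λ]
        ⨁ ω : {ω : Ω // heightFun ω = i}, (Fin (n ω.1) → Δ ω.1))

/-- The trace `tr_L(N)` of `L` in `N`: the sum of the images of all `Λ`-homomorphisms `L → N`. -/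
def traceSubmodule (Λ : Type u) [Ring Λ] (L N : Type u)
    [AddCommGroup L] [Module Λ L] [AddCommGroup N] [Module Λ N] : Submodule Λ N :=
  ⨆ f : L →ₗ[Λ] N, LinearMap.range f

theorem aux_height_mono {Ω : Type v} [Preorder Ω] [Fintype Ω] {x y : Ω} (h : x ≤ y) :
    heightFun x ≤ heightFun y := by
  unfold heightFun
  rw [← Order.height_eq_iSup_last_eq, ← Order.height_eq_iSup_last_eq]
  refine Nat.add_le_add_left (ENat.toNat_le_toNat (Order.height_mono h) ?_) 1
  have : Order.height y ≤ (Fintype.card Ω : ℕ∞) := by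
    rw [Order.height_eq_iSup_last_eq]
    refine iSup₂_le fun p _ => ?_
    exact_mod_cast p.length_lt_card.le
  exact ne_top_of_le_ne_top (ENat.coe_ne_top _) this

theorem aux_hom_zero {Λ : Type u} [Ring Λ] {Ω : Type v} [Preorder Ω] [Fintype Ω]
    (Δ : Ω → Type u) [∀ ω, AddCommGroup (Δ ω)] [∀ ω, Module Λ (Δ ω)]
    (hs : IsHomologicalSystem Λ Δ) (i j : ℕ) (hij : i < j) (n m : Ω → ℕ)
    (f : (⨁ ω : {ω : Ω // heightFun ω = j}, (Fin (n ω.1) → Δ ω.1)) →ₗ[Λ]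
      ⨁ ω : {ω : Ω // heightFun ω = i}, (Fin (m ω.1) → Δ ω.1)) : f = 0 := by
  classical
  refine DirectSum.linearMap_ext _ fun ω => ?_
  refine LinearMap.pi_ext' fun k => ?_
  refine LinearMap.ext fun x => ?_
  refine DFinsupp.ext fun ω' => funext fun l => ?_
  let g : Δ ω.1 →ₗ[Λ] Δ ω'.1 :=
    (LinearMap.proj l).comp ((DirectSum.component Λ _ _ ω').comp
      ((f.comp (DirectSum.lof Λ _ _ ω)).comp (LinearMap.single Λ _ k)))
  have hg : g = 0 := by
    by_contra h
    have h1 := aux_height_mono (hs.hs3 _ _ g h)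
    rw [ω.2, ω'.2] at h1
    omega
  exact LinearMap.congr_fun hg x

theorem aux_range_le {Λ : Type u} [Ring Λ] {Ω : Type v} [Preorder Ω] [Fintype Ω]
    (Δ : Ω → Type u) [∀ ω, AddCommGroup (Δ ω)] [∀ ω, Module Λ (Δ ω)]
    (hs : IsHomologicalSystem Λ Δ) (a : ℕ) (ha : 1 ≤ a)
    (M : Type u) [AddCommGroup M] [Module Λ M]
    (W W' : ℕ → Submodule Λ M) (n n' : Ω → ℕ)
    (hW : IsHFiltration Λ Δ a W n) (hW' : IsHFiltration Λ Δ a W' n')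
    (f : W' a →ₗ[Λ] M) : LinearMap.range f ≤ W a := by
  obtain ⟨e'⟩ := hW'.2.2.2 a ha le_rfl
  have hb : (W' (a + 1)).comap (W' a).subtype = ⊥ := by
    rw [hW'.1]
    exact Submodule.ker_subtype _
  let q := (Submodule.quotEquivOfEqBot _ hb).symm.trans e'
  have key : ∀ i, 1 ≤ i → i ≤ a → LinearMap.range f ≤ W i := by
    intro i hi
    induction i, hi using Nat.le_induction with
    | base => intro _; rw [hW.2.1]; exact le_top
    | succ i hi ih =>
      intro hia
      have h1 := ih (by omega)
      obtain ⟨e⟩ := hW.2.2.2 i hi (by omega)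
      let f' : W' a →ₗ[Λ] W i := f.codRestrict (W i) fun x => h1 ⟨x, rfl⟩
      have h0 := aux_hom_zero Δ hs i a (by omega) n' n
        (e.toLinearMap.comp ((Submodule.mkQ _).comp (f'.comp q.symm.toLinearMap)))
      rintro _ ⟨x, rfl⟩
      have h2 := LinearMap.congr_fun h0 (q x)
      simp only [LinearMap.comp_apply, LinearEquiv.coe_coe, LinearEquiv.symm_apply_apply,
        LinearMap.zero_apply, LinearEquiv.map_eq_zero_iff, Submodule.mkQ_apply,
        Submodule.Quotient.mk_eq_zero] at h2
      exact h2
  exact key a ha le_rfl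

/-- The bottom layer `W a` of an `h`-filtration of `M ∈ 𝔉(Δ)` is uniquely determined by `M`:
any two `h`-filtrations have the same bottom layer, which equals the trace `tr_{W a}(M)`. -/
theorem hFiltration_bottom_layer_unique
    {R : Type u} [CommRing R] [IsArtinianRing R]
    {Λ : Type u} [Ring Λ] [Algebra R Λ] [Module.Finite R Λ]
    {Ω : Type v} [Preorder Ω] [Fintype Ω] [Nonempty Ω]
    (Δ : Ω → Type u) [∀ ω, AddCommGroup (Δ ω)] [∀ ω, Module Λ (Δ ω)]
    (hs : IsHomologicalSystem Λ Δ)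
    (a : ℕ) (hIm : Set.range (fun ω : Ω => heightFun ω) = Set.Icc 1 a)
    (M : Type u) [AddCommGroup M] [Module Λ M] [Module.Finite Λ M]
    (hM : MemFiltCat Λ Δ M)
    (W W' : ℕ → Submodule Λ M) (n n' : Ω → ℕ)
    (hW : IsHFiltration Λ Δ a W n) (hW' : IsHFiltration Λ Δ a W' n') :
    W a = W' a ∧ W a = traceSubmodule Λ (↥(W a)) M := by
  have ha : 1 ≤ a := by
    obtain ⟨ω⟩ := ‹Nonempty Ω›
    have : heightFun ω ∈ Set.Icc 1 a := hIm ▸ ⟨ω, rfl⟩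
    exact this.1.trans this.2
  refine ⟨le_antisymm ?_ ?_, le_antisymm ?_ ?_⟩
  · simpa using aux_range_le Δ hs a ha M W' W n' n hW' hW (W a).subtype
  · simpa using aux_range_le Δ hs a ha M W W' n n' hW hW' (W' a).subtype
  · refine le_trans ?_ (le_iSup (fun f : W a →ₗ[Λ] M => LinearMap.range f) (W a).subtype)
    simp
  · exact iSup_le fun f => aux_range_le Δ hs a ha M W W n n hW hW f
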